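/- The Pacman cellular automaton (X,T) has no diam-mean equicontinuity points; in particular, the set EQ^{DM} of diam-mean equicontinuity points is empty, so (X,T) is not almost diam-mean equicontinuous (EQ^{DM} is not a residual subset of X). -/

import Mathlib

/-!
Every ball contains, for each large time `n`, two points whose `n`-th images differ at the
origin; so the diameters are eventually equal to `1` and no averaging makes them small.

Replace `x` outside a window by empty space and put a door at each end `l < 0 < L` of the window,
obtaining `y`. Doors are permanent, and the evolution on `[l, ∞)` does not depend on what lies to
the left of the door `l` (`iterate_agree`). Every ghost or pacman in `[l, ∞)` eventually leaves
through `l`: a ghost turns into a pacman at the next door to its left, the pacman turns into a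
keymaster at the next door to its right, and the keymaster passes through the door on its left.
The potential `pot` strictly decreases along this history, so `[l, ∞)` is eventually free of
particles (`eventually_quiet`).

Now let a single keymaster approach from the right. A lone particle in `[l, ∞)` stays a lone
particle and moves by at most one cell, unless it leaves at `l` (`single_step`). It does leave
eventually, so it visits the origin, after a time `τ` counted from its arrival at `L + 1`
(`exists_hit`). The initial distance of the keymaster is free, so the visit can be scheduled at
any large time `n`, whereas the orbit of `y` is free of particles at the origin then.

The non-residuality follows from emptiness by the Baire category theorem for the compact
space `PacX`.
-/


/-- The six-letter alphabet of the Pacman cellular automaton: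
`O` = empty space, `D` = empty door, `P` = pacman, `G` = ghost,
`K` = keymaster ghost, `E` = door with ghost. -/
inductive PacSym : Type
  | O | D | P | G | K | E
  deriving DecidableEq

open PacSym

/-- The radius-1 local rule `f(a,b,c)` of the Pacman cellular automaton. -/
def pacRule (a b c : PacSym) : PacSym :=
  if ((a = O ∨ a = G ∨ a = K) ∧
        (((b = O ∨ b = G ∨ b = K) ∧ (c = O ∨ c = D ∨ c = P)) ∨
          (b = P ∧ ¬(c = D ∨ c = E)))) ∨
      ((a = D ∨ a = E) ∧
        (((b = O ∨ b = K) ∧ (c = O ∨ c = D ∨ c = P)) ∨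
          (b = P ∧ ¬(c = D ∨ c = E)))) then O
  else if (b = D ∨ b = E) ∧ ¬(c = K ∨ c = E) then D
  else if ((a = O ∨ a = G ∨ a = K) ∧ (b = O ∨ b = G ∨ b = K) ∧ (c = G ∨ c = E)) ∨
      ((a = D ∨ a = E) ∧ (b = O ∨ b = K) ∧ c = E) then G
  else if (c = K ∧ (((a = O ∨ a = G ∨ a = K) ∧ (b = O ∨ b = G ∨ b = K)) ∨
        ((a = D ∨ a = E) ∧ (b = O ∨ b = K)))) ∨
      (a = P ∧ ¬(b = D ∨ b = E) ∧ (c = D ∨ c = E)) ∨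
      (b = P ∧ (c = D ∨ c = E)) then K
  else if (a = D ∧ (((b = O ∨ b = K) ∧ c = G) ∨ b = G)) ∨
      (a = P ∧ ¬(b = D ∨ b = E) ∧ ¬(c = D ∨ c = E)) then P
  else if (b = D ∨ b = E) ∧ (c = K ∨ c = E) then E
  else O

/-- The full shift `X = A^ℤ` over the Pacman alphabet. -/
abbrev PacX : Type := ℤ → PacSym

/-- The Pacman cellular automaton `T : X → X`, `(Tx)_i = f(x_{i-1}, x_i, x_{i+1})`. -/
def pacT (x : PacX) : PacX := fun i => pacRule (x (i - 1)) (x i) (x (i + 1))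

open Classical in
/-- The metric `d(x,y) = 2^{-min{|j| : x_j ≠ y_j}}` for `x ≠ y`, and `0` otherwise. -/
noncomputable def pdist (x y : PacX) : ℝ :=
  if x = y then 0
  else (2 : ℝ) ^ (-((sInf {n : ℕ | ∃ j : ℤ, j.natAbs = n ∧ x j ≠ y j} : ℕ) : ℤ))

/-- The open ball `B_δ(x) = {y : d(x,y) < δ}`. -/
def pball (x : PacX) (δ : ℝ) : Set PacX := {y | pdist x y < δ}

/-- The diameter of a set: `diam S = sup {d(a,b) : a, b ∈ S}`. -/
noncomputable def pdiam (S : Set PacX) : ℝ := sSup (Set.image2 pdist S S)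

/-- The point `x^{w,i} = ⋯0 0.w D 0^i K 0 0⋯`. -/
def xPt (w : List PacSym) (i : ℕ) : PacX := fun j =>
  if 0 ≤ j ∧ j < (w.length : ℤ) then w.getD j.toNat O
  else if j = (w.length : ℤ) then D
  else if j = (w.length : ℤ) + 1 + (i : ℤ) then K
  else O

/-- The point `x^{w} = ⋯0 0.w D 0 0⋯`. -/
def yPt (w : List PacSym) : PacX := fun j =>
  if 0 ≤ j ∧ j < (w.length : ℤ) then w.getD j.toNat O
  else if j = (w.length : ℤ) then D
  else O

/-- `x` is a diam-mean equicontinuity point of the Pacman CA. -/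
def diamMeanEqPt (x : PacX) : Prop :=
  ∀ ε > (0 : ℝ), ∃ δ > (0 : ℝ),
    Filter.limsup (fun n : ℕ =>
        (∑ i ∈ Finset.Icc 1 n, pdiam (pacT^[i] '' pball x δ)) / (n : ℝ)) Filter.atTop < ε

/-! ### Local properties of the rule -/

/-- Whether a symbol is a door, occupied or not. -/
def isDoor : PacSym → Bool
  | D => true
  | E => true
  | _ => false

/-- Whether a symbol carries no particle (ghost, keymaster, pacman or ghost in a door). -/
def quiet : PacSym → Bool
  | O => true
  | D => true
  | _ => false

lemma isDoor_rule (a b c : PacSym) : isDoor (pacRule a b c) = isDoor b := by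
  cases a <;> cases b <;> cases c <;> rfl

/-- A door blocks all information coming from its left. -/
lemma rule_door_left (a a' b c : PacSym) (hb : isDoor b = true) :
    pacRule a b c = pacRule a' b c := by
  cases b <;> simp [isDoor] at hb <;> cases a <;> cases a' <;> cases c <;> rfl

lemma rule_quiet (a b c : PacSym) (ha : isDoor b = true ∨ quiet a = true)
    (hb : quiet b = true) (hc : quiet c = true) : quiet (pacRule a b c) = true := by
  cases b <;> simp [quiet] at hb <;> cases c <;> simp [quiet] at hc <;>
    cases a <;> simp [isDoor, quiet] at ha <;> rfl

/-- A lone particle `s` between empty neighbours has exactly one successor. -/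
lemma rule_single (u v s r q : PacSym) (hu : isDoor v = true ∨ quiet u = true)
    (hv : quiet v = true) (hs : quiet s = false) (hr : quiet r = true) (hq : quiet q = true) :
    (quiet (pacRule u v s) = false ∧ quiet (pacRule v s r) = true ∧
      quiet (pacRule s r q) = true) ∨
    (quiet (pacRule u v s) = true ∧ quiet (pacRule v s r) = false ∧
      quiet (pacRule s r q) = true) ∨
    (quiet (pacRule u v s) = true ∧ quiet (pacRule v s r) = true ∧
      quiet (pacRule s r q) = false) := by
  cases v <;> simp [quiet] at hv <;> cases s <;> simp [quiet] at hs <;>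
    cases r <;> simp [quiet] at hr <;> cases q <;> simp [quiet] at hq <;>
    cases u <;> simp [isDoor, quiet] at hu <;> decide

/-- The potential of a symbol at distance `r` from the left end of a segment of length `W`; the
base value `B` accounts for the doors that are still to be crossed. -/
def pot (W B r : ℤ) : PacSym → ℤ
  | O => 0
  | D => 0
  | K => B + r
  | E => B + r
  | P => B + 2 * W - r
  | G => B + 2 * W + 1 + r

set_option maxHeartbeats 2000000 in
/-- If the potentials in a neighbourhood are at most `M`, then a particle produced by the rule has
potential at most `M - 1`. The left neighbour `a` counts only if the cell `b` is not a door. -/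
lemma pot_local (a b c : PacSym) (W Ba Bb Bc r M : ℤ) (h0 : 0 ≤ r) (h1 : r ≤ W)
    (hBa : isDoor b = false → Ba = Bb)
    (hBc : Bc = Bb + if isDoor c = true then 2 * W + 2 else 0)
    (hc1 : isDoor c = true → r + 1 ≤ W)
    (ha : isDoor b = false → quiet a = false → pot W Ba (r - 1) a ≤ M)
    (hb : quiet b = false → pot W Bb r b ≤ M)
    (hc : quiet c = false → pot W Bc (r + 1) c ≤ M)
    (hq : quiet (pacRule a b c) = false) : pot W Bb r (pacRule a b c) ≤ M - 1 := by
  cases a <;> cases b <;> cases c <;>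
    simp [isDoor, quiet, pot, pacRule] at * <;> omega

/-! ### The evolution to the right of a door -/

/-- `x` has doors at `l` and at `L`, and to the right of `L` it is empty, except possibly for a
keymaster at `L + 1`. -/
structure Sys (l L : ℤ) (x : PacX) : Prop where
  le : l ≤ L
  left : isDoor (x l) = true
  right : isDoor (x L) = true
  next : x (L + 1) = O ∨ x (L + 1) = K
  far : ∀ j, L + 1 < j → x j = O

lemma isDoor_pacT (x : PacX) (j : ℤ) : isDoor (pacT x j) = isDoor (x j) := isDoor_rule _ _ _

lemma isDoor_iter (x : PacX) (t : ℕ) (j : ℤ) : isDoor (pacT^[t] x j) = isDoor (x j) := by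
  induction t with
  | zero => rfl
  | succ t ih => rw [Function.iterate_succ_apply', isDoor_pacT, ih]

lemma Sys.step {l L : ℤ} {x : PacX} (h : Sys l L x) : Sys l L (pacT x) := by
  refine ⟨h.le, by rw [isDoor_pacT]; exact h.left, by rw [isDoor_pacT]; exact h.right, ?_, ?_⟩
  · have h1 := h.right
    have h2 := h.next
    have h3 := h.far (L + 1 + 1) (by omega)
    simp only [pacT, h3, add_sub_cancel_right]
    revert h1
    rcases h2 with h2 | h2 <;> rw [h2] <;> cases x L <;> simp [isDoor, pacRule]
  · intro j hj
    have h2 := h.far j hj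
    have h3 := h.far (j + 1) (by omega)
    have h4 : x (j - 1) = O ∨ x (j - 1) = K := by
      by_cases hj' : j = L + 2
      · subst hj'
        have := h.next
        rwa [show L + 2 - 1 = L + 1 by ring]
      · exact Or.inl (h.far _ (by omega))
    simp only [pacT, h2, h3]
    rcases h4 with h4 | h4 <;> rw [h4] <;> rfl

lemma Sys.iter {l L : ℤ} {x : PacX} (h : Sys l L x) (t : ℕ) : Sys l L (pacT^[t] x) := by
  induction t with
  | zero => exact h
  | succ t ih => rw [Function.iterate_succ_apply']; exact ih.step

lemma Sys.door_le {l L : ℤ} {x : PacX} (h : Sys l L x) {j : ℤ} (hj : isDoor (x j) = true) :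
    j ≤ L := by
  by_contra hlt
  rcases (show j = L + 1 ∨ L + 1 < j by omega) with rfl | h2
  · rcases h.next with h3 | h3 <;> simp [h3, isDoor] at hj
  · simp [h.far j h2, isDoor] at hj

/-- All particles in `[l, ∞)` eventually leave through the door `l`. -/
lemma eventually_quiet {l L : ℤ} {x : PacX} (h : Sys l L x) :
    ∃ N : ℕ, ∀ t ≥ N, ∀ j ≥ l, quiet (pacT^[t] x j) = true := by
  set W : ℤ := L + 1 - l with hW
  set B : ℤ → ℤ := fun j =>
    (2 * W + 2) * (((Finset.Icc l j).filter (fun k => isDoor (x k) = true)).card : ℤ) with hB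
  have hle := h.le
  have hW0 : 0 ≤ W := by omega
  have hB0 : ∀ j, 0 ≤ B j := fun j => by simp only [hB]; positivity
  have hBs : ∀ j ≥ l, B (j + 1) = B j + if isDoor (x (j + 1)) = true then 2 * W + 2 else 0 := by
    intro j hj
    have hI : Finset.Icc l (j + 1) = insert (j + 1) (Finset.Icc l j) := by
      ext k; simp only [Finset.mem_Icc, Finset.mem_insert]; omega
    have hn : j + 1 ∉ (Finset.Icc l j).filter (fun k => isDoor (x k) = true) := by
      simp
    simp only [hB, hI, Finset.filter_insert]
    split_ifs
    · rw [Finset.card_insert_of_notMem hn]; push_cast; ring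
    · ring
  obtain ⟨M, hM⟩ := Finset.exists_le
    ((Finset.Icc l (L + 1)).image (fun j => pot W (B j) (j - l) (x j)))
  have key : ∀ t : ℕ, ∀ j ≥ l, quiet (pacT^[t] x j) = false →
      pot W (B j) (j - l) (pacT^[t] x j) ≤ M - t := by
    intro t
    induction t with
    | zero =>
      intro j hj hq
      have hjL : j ≤ L + 1 := by
        by_contra hlt
        simp [h.far j (by omega), quiet] at hq
      simpa using hM _ (Finset.mem_image_of_mem _ (Finset.mem_Icc.2 ⟨hj, hjL⟩))
    | succ t ih =>
      intro j hj hq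
      have hjL : j ≤ L + 1 := by
        by_contra hlt
        rw [(h.iter (t + 1)).far j (by omega)] at hq
        simp [quiet] at hq
      rw [Function.iterate_succ_apply'] at hq ⊢
      have hd := isDoor_iter x t
      have hS := h.iter t
      generalize pacT^[t] x = z at *
      have hgt : isDoor (z j) = false → l + 1 ≤ j := by
        intro hf
        by_contra hlt
        obtain rfl : j = l := by omega
        rw [hS.left] at hf
        cases hf
      have := pot_local (z (j - 1)) (z j) (z (j + 1)) W (B (j - 1)) (B j) (B (j + 1)) (j - l)
        (M - t) (by omega) (by omega)
        (fun hf => by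
          have h1 := hBs (j - 1) (by have := hgt hf; omega)
          rw [sub_add_cancel, ← hd, hf] at h1
          simpa using h1.symm)
        (by rw [hd]; exact hBs j hj)
        (fun hdr => by have := hS.door_le hdr; omega)
        (fun hf hqa => by
          have h1 := ih (j - 1) (by have := hgt hf; omega) hqa
          rwa [show j - 1 - l = j - l - 1 by ring] at h1)
        (ih j hj)
        (fun hqc => by
          have h1 := ih (j + 1) (by omega) hqc
          rwa [show j + 1 - l = j - l + 1 by ring] at h1)
        hq
      show pot W (B j) (j - l) (pacRule (z (j - 1)) (z j) (z (j + 1))) ≤ _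
      push_cast
      linarith
  refine ⟨(M + 1).toNat, fun t ht j hj => ?_⟩
  by_contra hq
  have hq : quiet (pacT^[t] x j) = false := by simpa using hq
  have h1 := key t j hj hq
  have hjL : j ≤ L + 1 := by
    by_contra hlt
    simp [(h.iter t).far j (by omega), quiet] at hq
  have h2 : 0 ≤ pot W (B j) (j - l) (pacT^[t] x j) := by
    have := hB0 j
    cases pacT^[t] x j <;> simp only [pot] <;> omega
  omega

/-- The evolution on `[l, ∞)` is determined by the initial state on `[l, ∞)` if `l` is a door. -/
lemma iterate_agree {l : ℤ} {x x' : PacX} (hl : isDoor (x l) = true)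
    (h : ∀ j ≥ l, x j = x' j) (t : ℕ) : ∀ j ≥ l, pacT^[t] x j = pacT^[t] x' j := by
  induction t with
  | zero => exact h
  | succ t ih =>
    intro j hj
    rw [Function.iterate_succ_apply', Function.iterate_succ_apply']
    simp only [pacT]
    rw [← ih j hj, ← ih (j + 1) (by omega)]
    rcases eq_or_lt_of_le hj with rfl | hlt
    · exact rule_door_left _ _ _ _ (by rw [isDoor_iter]; exact hl)
    · rw [ih (j - 1) (by omega)]

/-- A lone particle in `[l, ∞)` that is not at `l` stays in `[l, ∞)` and alone there, and moves
left by at most one cell. -/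
lemma single_step {l : ℤ} {x : PacX} (hl : isDoor (x l) = true) {p : ℤ} (hp : l < p)
    (hs : quiet (x p) = false) (ho : ∀ j ≥ l, j ≠ p → quiet (x j) = true) :
    ∃ p', p - 1 ≤ p' ∧ quiet (pacT x p') = false ∧
      ∀ j ≥ l, j ≠ p' → quiet (pacT x j) = true := by
  have hleft : ∀ j ≥ l, j ≤ p → isDoor (x j) = true ∨ quiet (x (j - 1)) = true := by
    intro j hj hjp
    rcases eq_or_lt_of_le hj with rfl | hlt
    · exact Or.inl hl
    · exact Or.inr (ho _ (by omega) (by omega))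
  have hfar : ∀ j ≥ l, j ≠ p - 1 → j ≠ p → j ≠ p + 1 → quiet (pacT x j) = true := by
    intro j hj h1 h2 h3
    refine rule_quiet _ _ _ ?_ (ho j hj h2) (ho _ (by omega) (by omega))
    rcases eq_or_lt_of_le hj with rfl | hlt
    · exact Or.inl hl
    · exact Or.inr (ho _ (by omega) (by omega))
  have h := rule_single (x (p - 1 - 1)) (x (p - 1)) (x p) (x (p + 1)) (x (p + 1 + 1))
    (hleft _ (by omega) (by omega)) (ho _ (by omega) (by omega)) hs
    (ho _ (by omega) (by omega)) (ho _ (by omega) (by omega))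
  have e1 : pacT x (p - 1) = pacRule (x (p - 1 - 1)) (x (p - 1)) (x p) := by
    simp [pacT]
  have e2 : pacT x p = pacRule (x (p - 1)) (x p) (x (p + 1)) := rfl
  have e3 : pacT x (p + 1) = pacRule (x p) (x (p + 1)) (x (p + 1 + 1)) := by
    simp [pacT]
  rw [← e1, ← e2, ← e3] at h
  have hall : ∀ p', (p' ≠ p - 1 → quiet (pacT x (p - 1)) = true) →
      (p' ≠ p → quiet (pacT x p) = true) → (p' ≠ p + 1 → quiet (pacT x (p + 1)) = true) →
      ∀ j ≥ l, j ≠ p' → quiet (pacT x j) = true := by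
    intro p' h1 h2 h3 j hj hjp
    by_cases j1 : j = p - 1
    · rw [j1] at hjp ⊢; exact h1 hjp.symm
    by_cases j2 : j = p
    · rw [j2] at hjp ⊢; exact h2 hjp.symm
    by_cases j3 : j = p + 1
    · rw [j3] at hjp ⊢; exact h3 hjp.symm
    exact hfar j hj j1 j2 j3
  rcases h with ⟨h1, h2, h3⟩ | ⟨h1, h2, h3⟩ | ⟨h1, h2, h3⟩
  · exact ⟨p - 1, by omega, h1, hall _ (fun h => absurd rfl h) (fun _ => h2) (fun _ => h3)⟩
  · exact ⟨p, by omega, h2, hall _ (fun _ => h1) (fun h => absurd rfl h) (fun _ => h3)⟩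
  · exact ⟨p + 1, by omega, h3, hall _ (fun _ => h1) (fun _ => h2) (fun h => absurd rfl h)⟩

/-- A lone particle that starts to the right of the origin visits the origin, since it must
leave through the door `l < 0`. -/
lemma exists_hit {l L : ℤ} {x : PacX} (h : Sys l L x) (hl : l < 0) {p : ℤ} (hp : 0 < p)
    (hs : quiet (x p) = false) (ho : ∀ j ≥ l, j ≠ p → quiet (x j) = true) :
    ∃ t : ℕ, quiet (pacT^[t] x 0) = false := by
  by_contra hno
  have hno : ∀ t : ℕ, quiet (pacT^[t] x 0) = true := by simpa using hno
  have key : ∀ t : ℕ, ∃ p : ℤ, 0 < p ∧ quiet (pacT^[t] x p) = false ∧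
      ∀ j ≥ l, j ≠ p → quiet (pacT^[t] x j) = true := by
    intro t
    induction t with
    | zero => exact ⟨p, hp, hs, ho⟩
    | succ t ih =>
      obtain ⟨p, hp, hs, ho⟩ := ih
      obtain ⟨p', h1, h2, h3⟩ := single_step (h.iter t).left (by omega) hs ho
      have h0 := hno (t + 1)
      rw [Function.iterate_succ_apply'] at h0 ⊢
      have hne : p' ≠ 0 := by
        rintro rfl
        simp [h0] at h2
      exact ⟨p', by omega, h2, h3⟩
  obtain ⟨N, hN⟩ := eventually_quiet h
  obtain ⟨p, hp, hs, -⟩ := key N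
  simp [hN N le_rfl p (by omega)] at hs

/-- A keymaster at distance `i` from the cell `L + 1` reaches that cell at time `i`, without
influencing the rest of the configuration before. -/
lemma iterate_key {l L : ℤ} {y : PacX} (h : Sys l L y) (hO : y (L + 1) = O) (i t : ℕ)
    (ht : t ≤ i) : pacT^[t] (Function.update y (L + 1 + i) K) =
      Function.update (pacT^[t] y) (L + 1 + (i - t)) K := by
  have hO' : ∀ t : ℕ, pacT^[t] y (L + 1) = O := by
    intro t
    induction t with
    | zero => exact hO
    | succ t ih =>
      have h1 := (h.iter t).right
      have h3 := (h.iter t).far (L + 1 + 1) (by omega)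
      rw [Function.iterate_succ_apply']
      simp only [pacT, h3, ih, add_sub_cancel_right]
      revert h1
      cases pacT^[t] y L <;> simp [isDoor, pacRule]
  induction t with
  | zero => simp
  | succ t ih =>
    rw [Function.iterate_succ_apply', ih (by omega), Function.iterate_succ_apply']
    have hz := hO' t
    have hS := h.iter t
    generalize pacT^[t] y = z at *
    have hzO : ∀ j, L < j → z j = O := by
      intro j hj
      rcases (show j = L + 1 ∨ L + 1 < j by omega) with rfl | h2
      · exact hz
      · exact hS.far j h2
    have hti : (t : ℤ) + 1 ≤ i := by exact_mod_cast ht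
    set q : ℤ := L + 1 + (i - t) with hq
    have hq' : L + 1 + ((i : ℤ) - ((t + 1 : ℕ) : ℤ)) = q - 1 := by push_cast; omega
    rw [hq']
    have hLq : L + 2 ≤ q := by omega
    funext j
    simp only [pacT, Function.update_apply]
    by_cases j1 : j = q - 1
    · subst j1
      have hb := hzO (q - 1) (by omega)
      have ha : z (q - 1 - 1) = O ∨ isDoor (z (q - 1 - 1)) = true := by
        rcases (show q - 1 - 1 = L ∨ L < q - 1 - 1 by omega) with h1 | h1
        · rw [h1]; exact Or.inr hS.right
        · exact Or.inl (hzO _ h1)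
      rw [if_neg (by omega), if_neg (by omega), if_pos (by omega), if_pos rfl, hb]
      revert ha
      cases z (q - 1 - 1) <;> simp [isDoor, pacRule]
    by_cases j2 : j = q
    · subst j2
      rw [if_neg (by omega), if_pos rfl, if_neg (by omega), if_neg (by omega),
        hzO (q - 1) (by omega), hzO q (by omega), hzO (q + 1) (by omega)]
      rfl
    by_cases j3 : j = q + 1
    · subst j3
      rw [if_pos (by omega), if_neg (by omega), if_neg (by omega), if_neg (by omega),
        hzO (q + 1 - 1) (by omega), hzO (q + 1) (by omega), hzO (q + 1 + 1) (by omega)]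
      rfl
    rw [if_neg (by omega), if_neg (by omega), if_neg (by omega), if_neg (by omega)]

/-! ### The metric -/

lemma pdist_nonneg (x y : PacX) : 0 ≤ pdist x y := by
  unfold pdist; split_ifs <;> positivity

lemma pdist_le_one (x y : PacX) : pdist x y ≤ 1 := by
  unfold pdist
  split_ifs
  · norm_num
  · exact zpow_le_one_of_nonpos₀ (by norm_num) (by simp)

lemma pdist_eq_one {x y : PacX} (h : x 0 ≠ y 0) : pdist x y = 1 := by
  unfold pdist
  rw [if_neg (fun e => h (by rw [e]))]
  have : sInf {n : ℕ | ∃ j : ℤ, j.natAbs = n ∧ x j ≠ y j} = 0 :=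
    Nat.sInf_eq_zero.2 (Or.inl ⟨0, rfl, h⟩)
  simp [this]

lemma pdist_lt_of_agree {x y : PacX} {m : ℕ} (h : ∀ j : ℤ, j.natAbs ≤ m → x j = y j) :
    pdist x y < (2 : ℝ) ^ (-(m : ℤ)) := by
  unfold pdist
  split_ifs with he
  · positivity
  · refine zpow_lt_zpow_right₀ (by norm_num) ?_
    have hne : {n : ℕ | ∃ j : ℤ, j.natAbs = n ∧ x j ≠ y j}.Nonempty := by
      obtain ⟨j, hj⟩ := Function.ne_iff.1 he
      exact ⟨_, j, rfl, hj⟩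
    obtain ⟨j, hj, hxy⟩ := Nat.sInf_mem hne
    have : m < j.natAbs := by
      by_contra hle
      exact hxy (h j (by omega))
    omega

lemma agree_of_pdist_lt {x y : PacX} {m : ℕ} (h : pdist x y < (2 : ℝ) ^ (-(m : ℤ)))
    (j : ℤ) (hj : j.natAbs ≤ m) : x j = y j := by
  by_contra hxy
  unfold pdist at h
  rw [if_neg (fun e => hxy (by rw [e])), zpow_lt_zpow_iff_right₀ (by norm_num)] at h
  have : sInf {n : ℕ | ∃ j : ℤ, j.natAbs = n ∧ x j ≠ y j} ≤ j.natAbs :=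
    Nat.sInf_le ⟨j, rfl, hxy⟩
  omega

lemma exists_window {δ : ℝ} (hδ : 0 < δ) : ∃ m : ℕ, (2 : ℝ) ^ (-(m : ℤ)) < δ := by
  obtain ⟨m, hm⟩ := exists_pow_lt_of_lt_one hδ (show (1 / 2 : ℝ) < 1 by norm_num)
  refine ⟨m, ?_⟩
  rwa [zpow_neg, zpow_natCast, ← inv_pow, ← one_div]

lemma pdiam_le_one (S : Set PacX) : pdiam S ≤ 1 :=
  Real.sSup_le (by rintro _ ⟨a, _, b, _, rfl⟩; exact pdist_le_one a b) (by norm_num)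

lemma pdiam_nonneg (S : Set PacX) : 0 ≤ pdiam S :=
  Real.sSup_nonneg (by rintro _ ⟨a, _, b, _, rfl⟩; exact pdist_nonneg a b)

lemma pdiam_eq_one {S : Set PacX} {a b : PacX} (ha : a ∈ S) (hb : b ∈ S) (h : a 0 ≠ b 0) :
    pdiam S = 1 := by
  refine le_antisymm (pdiam_le_one S) ?_
  rw [← pdist_eq_one h]
  exact le_csSup ⟨1, by rintro _ ⟨a, _, b, _, rfl⟩; exact pdist_le_one a b⟩ ⟨a, ha, b, hb, rfl⟩

/-! ### No diam-mean equicontinuity points -/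

/-- The images of any ball eventually have diameter `1`. -/
lemma eventually_diam_one (x : PacX) {δ : ℝ} (hδ : 0 < δ) :
    ∃ N : ℕ, ∀ n ≥ N, pdiam (pacT^[n] '' pball x δ) = 1 := by
  obtain ⟨m, hm⟩ := exists_window hδ
  set L : ℤ := m + 1 with hL
  have hm0 : (0 : ℤ) ≤ m := Int.natCast_nonneg m
  obtain ⟨y, hy⟩ : ∃ y : PacX, y = fun j : ℤ =>
    if j.natAbs ≤ m then x j else if j.natAbs = m + 1 then D else O := ⟨_, rfl⟩
  have hyx : ∀ j : ℤ, j.natAbs ≤ m → x j = y j := fun j hj => by simp [hy, hj]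
  have hyD : ∀ j : ℤ, j.natAbs = m + 1 → y j = D := fun j hj => by simp [hy, hj]
  have hyO : ∀ j : ℤ, m + 1 < j.natAbs → y j = O := fun j hj => by
    simp [hy, show ¬ j.natAbs ≤ m by omega, show j.natAbs ≠ m + 1 by omega]
  have hyS : Sys (-L) L y :=
    ⟨by omega, by rw [hyD _ (by omega)]; rfl, by rw [hyD _ (by omega)]; rfl,
      Or.inl (hyO _ (by omega)), fun j hj => hyO _ (by omega)⟩
  -- `w` is the limit state of `y` on `[-L, ∞)`, with a keymaster added at `L + 1`.
  obtain ⟨w, hw⟩ : ∃ w : PacX, w = Function.update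
    (fun j => if isDoor (y j) = true then D else O) (L + 1) K := ⟨_, rfl⟩
  have hwK : w (L + 1) = K := by simp [hw]
  have hwne : ∀ j, j ≠ L + 1 → w j = if isDoor (y j) = true then D else O := fun j hj => by
    simp [hw, hj]
  have hwS : Sys (-L) L w :=
    ⟨by omega, by rw [hwne _ (by omega), hyS.left]; rfl,
      by rw [hwne _ (by omega), hyS.right]; rfl, Or.inr hwK,
      fun j hj => by rw [hwne _ (by omega), hyS.far j hj]; rfl⟩
  obtain ⟨τ, hτ⟩ := exists_hit hwS (by omega) (show 0 < L + 1 by omega) (by rw [hwK]; rfl)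
    (fun j _ hj => by rw [hwne j hj]; split_ifs <;> rfl)
  obtain ⟨N, hN⟩ := eventually_quiet hyS
  refine ⟨N + τ, fun n hn => ?_⟩
  obtain ⟨i, rfl⟩ : ∃ i, n = τ + i := ⟨n - τ, by omega⟩
  set z : PacX := Function.update y (L + 1 + i) K with hz
  have hzx : ∀ j : ℤ, j.natAbs ≤ m → x j = z j := fun j hj => by
    rw [hz, Function.update_of_ne (by omega)]; exact hyx j hj
  have hzi : pacT^[i] z = Function.update (pacT^[i] y) (L + 1) K := by
    have := iterate_key hyS (hyO _ (by omega)) i i le_rfl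
    simpa using this
  have hwz : ∀ j ≥ -L, w j = pacT^[i] z j := by
    intro j hj
    rw [hzi]
    by_cases hj1 : j = L + 1
    · rw [hj1, hwK]; simp
    · rw [hwne j hj1, Function.update_of_ne hj1, ← isDoor_iter y i j]
      have hq := hN i (by omega) j hj
      revert hq
      cases pacT^[i] y j <;> simp [quiet, isDoor]
  refine pdiam_eq_one (a := pacT^[τ + i] y) (b := pacT^[τ + i] z)
    ⟨y, (pdist_lt_of_agree hyx).trans hm, rfl⟩ ⟨z, (pdist_lt_of_agree hzx).trans hm, rfl⟩ ?_
  intro he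
  have h1 := hN (τ + i) (by omega) 0 (by omega)
  rw [he, Function.iterate_add_apply, ← iterate_agree hwS.left hwz τ 0 (by omega), hτ] at h1
  cases h1

lemma not_diamMeanEqPt (x : PacX) : ¬ diamMeanEqPt x := by
  intro h
  obtain ⟨δ, hδ, hlim⟩ := h (1 / 2) (by norm_num)
  obtain ⟨N, hN⟩ := eventually_diam_one x hδ
  have hbdd : Filter.IsBoundedUnder (· ≤ ·) Filter.atTop (fun n : ℕ =>
      (∑ i ∈ Finset.Icc 1 n, pdiam (pacT^[i] '' pball x δ)) / (n : ℝ)) := by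
    refine Filter.isBoundedUnder_of ⟨1, fun n => div_le_one_of_le₀ ?_ (Nat.cast_nonneg n)⟩
    calc _ ≤ ∑ i ∈ Finset.Icc 1 n, (1 : ℝ) := Finset.sum_le_sum fun i _ => pdiam_le_one _
      _ = n := by simp
  obtain ⟨n, hn1, hn2⟩ := ((Filter.eventually_lt_of_limsup_lt hlim hbdd).and
    (Filter.eventually_ge_atTop (2 * N + 1))).exists
  have hsum : (n : ℝ) - N ≤ ∑ i ∈ Finset.Icc 1 n, pdiam (pacT^[i] '' pball x δ) := by
    calc (n : ℝ) - N = ∑ i ∈ Finset.Icc (N + 1) n, (1 : ℝ) := by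
          simp [Nat.cast_sub (show N ≤ n by omega)]
      _ = ∑ i ∈ Finset.Icc (N + 1) n, pdiam (pacT^[i] '' pball x δ) :=
          Finset.sum_congr rfl fun i hi => (hN i (by have := Finset.mem_Icc.1 hi; omega)).symm
      _ ≤ _ := Finset.sum_le_sum_of_subset_of_nonneg
          (Finset.Icc_subset_Icc (by omega) le_rfl) fun i _ _ => pdiam_nonneg _
  have hn3 : (2 * N + 1 : ℝ) ≤ n := by exact_mod_cast hn2
  have hN0 : (0 : ℝ) ≤ N := Nat.cast_nonneg N
  rw [div_lt_iff₀ (by linarith)] at hn1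
  linarith

/-! ### Baire category -/

instance : Finite PacSym :=
  Finite.of_injective (fun s : PacSym => (match s with
    | O => 0 | D => 1 | P => 2 | G => 3 | K => 4 | E => 5 : Fin 6)) (by
      intro a b
      cases a <;> cases b <;> simp)

/-- The Baire category theorem for open and dense sets in the sense of `pdist`. -/
lemma baire_nonempty (F : ℕ → Set PacX)
    (hF : ∀ n : ℕ, (∀ y ∈ F n, ∃ ε > (0 : ℝ), pball y ε ⊆ F n) ∧
      (∀ z : PacX, ∀ ε > (0 : ℝ), ∃ y ∈ F n, pdist z y < ε)) : (⋂ n : ℕ, F n).Nonempty := by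
  let _ : TopologicalSpace PacSym := ⊥
  have _ : DiscreteTopology PacSym := ⟨rfl⟩
  have _ : Nonempty PacX := ⟨fun _ => O⟩
  refine (dense_iInter_of_isOpen (fun n => ?_) (fun n => ?_)).nonempty
  · rw [isOpen_iff_forall_mem_open]
    intro y hy
    obtain ⟨ε, hε, hsub⟩ := (hF n).1 y hy
    obtain ⟨m, hm⟩ := exists_window hε
    refine ⟨Set.pi (Set.Icc (-(m : ℤ)) m) (fun j => {y j}), fun z hz => hsub ?_,
      isOpen_set_pi (Set.finite_Icc _ _) fun _ _ => isOpen_discrete _, fun j _ => rfl⟩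
    refine (pdist_lt_of_agree fun j hj => ?_).trans hm
    exact (hz j ⟨by omega, by omega⟩).symm
  · rw [dense_iff_inter_open]
    rintro U hU ⟨z, hz⟩
    obtain ⟨I, u, hu, hsub⟩ := isOpen_pi_iff.1 hU z hz
    obtain ⟨m, hm⟩ := Finset.exists_le (I.image Int.natAbs)
    obtain ⟨y, hy, hzy⟩ := (hF n).2 z ((2 : ℝ) ^ (-(m : ℤ))) (by positivity)
    refine ⟨y, hsub fun j hj => ?_, hy⟩
    rw [← agree_of_pdist_lt hzy j (hm _ (Finset.mem_image_of_mem _ hj))]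
    exact (hu j hj).2

/-- The Pacman CA has no diam-mean equicontinuity points; in particular `EQ^{DM}` is empty
and is not residual (it contains no countable intersection of metrically dense open sets),
so the Pacman CA is not almost diam-mean equicontinuous. -/
theorem pacman_not_almost_diam_mean_equicontinuous :
    {x : PacX | diamMeanEqPt x} = ∅ ∧
    ¬ ∃ F : ℕ → Set PacX,
        (∀ n : ℕ, (∀ y ∈ F n, ∃ ε > (0 : ℝ), pball y ε ⊆ F n) ∧ (∀ z : PacX, ∀ ε > (0 : ℝ), ∃ y ∈ F n, pdist z y < ε)) ∧
        (⋂ n : ℕ, F n) ⊆ {x : PacX | diamMeanEqPt x} := by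
  have hempty : {x : PacX | diamMeanEqPt x} = ∅ :=
    Set.eq_empty_iff_forall_notMem.2 not_diamMeanEqPt
  refine ⟨hempty, ?_⟩
  rintro ⟨F, hF, hsub⟩
  obtain ⟨y, hy⟩ := baire_nonempty F hF
  exact not_diamMeanEqPt y (hsub hy)
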